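/- Let λ > 0 and β ∈ (0,1]. For every n ∈ ℕ₀ and all x, y ∈ ℝ, C_n^{λ,β}(x + y) = ∑_{k=0}^n binom(n,k) C_k^{λ,β}(x) (y)_{n−k}, where (y)_m denotes the falling factorial (y)_0 = 1 and (y)_m = y(y−1)⋯(y−m+1) for m ∈ ℕ. -/

import Mathlib

/-!
The generating function `e^{x log(1+z)} / E_β(λz)` of the `C_n^{λ,β}(x)` turns `x ↦ x + y` into
multiplication by `e^{y log(1+z)} = (1+z)^y`, whose `m`-th derivative at `0` is the falling
factorial `(y)_m` (`iteratedDeriv_exp_mul_log_zero`). The identity is then the Leibniz rule for the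
`n`-th derivative of a product.

The Leibniz rule needs both factors to be smooth at `0`, so `E_β` has to be analytic there with
`E_β(0) ≠ 0`. Since `Γ ≥ 1/2` on `[1, ∞)` (`one_half_le_Gamma`), the coefficients of `E_β` are
bounded by `2`, and the series converges uniformly on the disc of radius `1/2`.
-/

open MeasureTheory Finset
open scoped ENNReal NNReal

noncomputable section

/-- The complex Mittag-Leffler function `E_β(z) = ∑ zⁿ / Γ(βn+1)`. -/
def mittagLeffler (β : ℝ) (z : ℂ) : ℂ :=
  ∑' n : ℕ, z ^ n / (Complex.Gamma ((β * n + 1 : ℝ) : ℂ))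

/-- The real Mittag-Leffler function `E_β(x) = ∑ xⁿ / Γ(βn+1)`. -/
def mittagLefflerR (β : ℝ) (x : ℝ) : ℝ :=
  ∑' n : ℕ, x ^ n / Real.Gamma (β * n + 1)

/-- The fractional Poisson measure `π_{λ,β} = ∑_k (λᵏ/k!) E_β⁽ᵏ⁾(-λ) δ_k` on `ℝ`. -/
def fracPoisson (lam β : ℝ) : Measure ℝ :=
  Measure.sum fun k : ℕ =>
    ENNReal.ofReal (lam ^ k / k.factorial * iteratedDeriv k (mittagLefflerR β) (-lam)) •
      Measure.dirac (k : ℝ)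

/-- The Poisson measure with rate `μ` on `ℝ`, `π_μ({k}) = (μᵏ/k!) e^{-μ}`. -/
def poissonMeasureR (μ : ℝ) : Measure ℝ :=
  Measure.sum fun k : ℕ =>
    ENNReal.ofReal (μ ^ k / k.factorial * Real.exp (-μ)) • Measure.dirac (k : ℝ)

/-- The generalized Appell polynomials
`C_n^{λ,β}(x) = dⁿ/dzⁿ [e^{x log(1+z)} / E_β(λz)]` at `z = 0`. -/
def genAppell (lam β : ℝ) (n : ℕ) (x : ℂ) : ℂ :=
  iteratedDeriv n
    (fun z : ℂ => Complex.exp (x * Complex.log (1 + z)) / mittagLeffler β (lam * z)) 0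

/-- The Appell polynomials `A_n^{λ,β}(x) = dⁿ/dzⁿ [e^{zx} / E_β(λ(eᶻ-1))]` at `z = 0`. -/
def appell (lam β : ℝ) (n : ℕ) (x : ℂ) : ℂ :=
  iteratedDeriv n
    (fun z : ℂ => Complex.exp (z * x) / mittagLeffler β (lam * (Complex.exp z - 1))) 0

/-- Stirling numbers of the first kind, via `(log(1+z))^k = k! ∑_{n≥k} s(n,k) zⁿ/n!`. -/
def stirlingFst (n k : ℕ) : ℝ :=
  iteratedDeriv n (fun x : ℝ => (Real.log (1 + x)) ^ k) 0 / k.factorial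

/-- Stirling numbers of the second kind, via `(eᶻ-1)^k = k! ∑_{n≥k} S(n,k) zⁿ/n!`. -/
def stirlingSnd (n k : ℕ) : ℝ :=
  iteratedDeriv n (fun x : ℝ => (Real.exp x - 1) ^ k) 0 / k.factorial

/-- The `n`-th moment of the fractional Poisson measure. -/
def fpMoment (lam β : ℝ) (n : ℕ) : ℝ := ∫ x, x ^ n ∂(fracPoisson lam β)

/-- `M̃_{λ,β}(m) = m! λᵐ / Γ(mβ+1)`. -/
def tildeM (lam β : ℝ) (m : ℕ) : ℝ := m.factorial * lam ^ m / Real.Gamma (m * β + 1)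

/-- The (partial exponential) Bell polynomials `B_{n,k}(x₁, …, x_{n-k+1})`. -/
def bellPoly (n k : ℕ) (x : ℕ → ℂ) : ℂ :=
  ∑ j ∈ (Fintype.piFinset fun _ : Fin (n - k + 1) => Finset.range (n + 1)).filter
      (fun j => (∑ i, j i) = k ∧ (∑ i, (i.1 + 1) * j i) = n),
    (n.factorial : ℂ) / (∏ i, ((j i).factorial : ℂ)) *
      ∏ i, (x (i.1 + 1) / ((i.1 + 1).factorial : ℂ)) ^ j i

lemma one_half_le_Gamma {x : ℝ} (hx : 1 ≤ x) : 1 / 2 ≤ Real.Gamma x := by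
  have key : ∀ t : ℝ, 2 ≤ t → 1 ≤ Real.Gamma t := fun t ht => by
    simpa using Real.Gamma_strictMonoOn_Ici.monotoneOn Set.self_mem_Ici ht ht
  rcases le_total 2 x with h | h
  · linarith [key x h]
  -- On `[1, 2]`, `x Γ(x) = Γ(x + 1) ≥ 1` and `x ≤ 2`.
  · have h1 := key (x + 1) (by linarith)
    rw [Real.Gamma_add_one (by linarith)] at h1
    have := Real.Gamma_pos_of_pos (show 0 < x by linarith)
    nlinarith

lemma analyticAt_mittagLeffler {β : ℝ} (hβ : 0 < β) : AnalyticAt ℂ (mittagLeffler β) 0 := by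
  have hd : DifferentiableOn ℂ (mittagLeffler β) (Metric.ball 0 (1 / 2)) := by
    refine Complex.differentiableOn_tsum_of_summable_norm (u := fun n : ℕ => (1 / 2 : ℝ) ^ n * 2)
      (summable_geometric_two.mul_right 2)
      (fun n => by fun_prop) Metric.isOpen_ball ?_
    intro n z hz
    have hz' : ‖z‖ ≤ 1 / 2 := by simpa using (mem_ball_zero_iff.mp hz).le
    have hG : 1 / 2 ≤ Real.Gamma (β * n + 1) :=
      one_half_le_Gamma (by have : 0 ≤ β * n := by positivity
                            linarith)
    rw [Complex.Gamma_ofReal, norm_div, norm_pow, Complex.norm_real, Real.norm_eq_abs,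
      abs_of_pos (by linarith), div_eq_mul_inv]
    gcongr
    rw [inv_le_comm₀ (by linarith) two_pos]
    linarith
  exact hd.analyticAt (Metric.ball_mem_nhds _ (by norm_num))

lemma mittagLeffler_zero (β : ℝ) : mittagLeffler β 0 = 1 := by
  unfold mittagLeffler
  rw [tsum_eq_single 0 (fun n hn => by simp [hn])]
  simp

lemma iteratedDeriv_exp_mul_log (y : ℂ) (m : ℕ) {z : ℂ} (hz : 1 + z ∈ Complex.slitPlane) :
    iteratedDeriv m (fun z : ℂ => Complex.exp (y * Complex.log (1 + z))) z =
      (descPochhammer ℂ m).eval y * Complex.exp ((y - m) * Complex.log (1 + z)) := by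
  induction m generalizing z with
  | zero => simp
  | succ m ih =>
    have hopen : IsOpen {w : ℂ | 1 + w ∈ Complex.slitPlane} :=
      Complex.isOpen_slitPlane.preimage (by fun_prop)
    have hev : iteratedDeriv m (fun z : ℂ => Complex.exp (y * Complex.log (1 + z))) =ᶠ[nhds z]
        fun w => (descPochhammer ℂ m).eval y * Complex.exp ((y - m) * Complex.log (1 + w)) :=
      Filter.eventually_of_mem (hopen.mem_nhds hz) fun w hw => ih hw
    have hd : HasDerivAt
        (fun w => (descPochhammer ℂ m).eval y * Complex.exp ((y - m) * Complex.log (1 + w)))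
        ((descPochhammer ℂ m).eval y *
          (Complex.exp ((y - m) * Complex.log (1 + z)) * ((y - m) * (1 / (1 + z))))) z :=
      (((((hasDerivAt_id z).const_add 1).clog hz).const_mul _).cexp).const_mul _
    rw [iteratedDeriv_succ, hev.deriv_eq, hd.deriv, descPochhammer_succ_right]
    have hexp : Complex.exp ((y - (m + 1 : ℕ)) * Complex.log (1 + z)) =
        Complex.exp ((y - m) * Complex.log (1 + z)) * (1 / (1 + z)) := by
      rw [show (y - (m + 1 : ℕ)) * Complex.log (1 + z) =
        (y - m) * Complex.log (1 + z) - Complex.log (1 + z) by push_cast; ring, Complex.exp_sub,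
        Complex.exp_log (Complex.slitPlane_ne_zero hz), div_eq_mul_one_div]
    rw [hexp]
    simp
    ring

lemma iteratedDeriv_exp_mul_log_zero (y : ℂ) (m : ℕ) :
    iteratedDeriv m (fun z : ℂ => Complex.exp (y * Complex.log (1 + z))) 0 =
      (descPochhammer ℂ m).eval y := by
  rw [iteratedDeriv_exp_mul_log y m (by simp)]
  simp

theorem stmt7 (lam β : ℝ) (hlam : 0 < lam) (hβ0 : 0 < β) (hβ1 : β ≤ 1) (n : ℕ) (x y : ℝ) :
    genAppell lam β n ((x : ℂ) + (y : ℂ)) =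
      ∑ k ∈ Finset.range (n + 1), (n.choose k : ℂ) * genAppell lam β k x *
        (descPochhammer ℂ (n - k)).eval (y : ℂ) := by
  have hlog (a : ℂ) : AnalyticAt ℂ (fun z : ℂ => Complex.exp (a * Complex.log (1 + z))) 0 :=
    (analyticAt_const.mul ((analyticAt_const.add analyticAt_id).clog (by simp))).cexp
  have hE : AnalyticAt ℂ (fun z : ℂ => mittagLeffler β (lam * z)) 0 :=
    AnalyticAt.fun_comp (by simpa using analyticAt_mittagLeffler hβ0)
      (analyticAt_const.mul analyticAt_id)
  have hf : AnalyticAt ℂ (fun z : ℂ =>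
      Complex.exp (x * Complex.log (1 + z)) / mittagLeffler β (lam * z)) 0 :=
    (hlog x).div hE (by simp [mittagLeffler_zero])
  have hsplit : (fun z : ℂ =>
      Complex.exp (((x : ℂ) + y) * Complex.log (1 + z)) / mittagLeffler β (lam * z)) =
      (fun z : ℂ => Complex.exp (x * Complex.log (1 + z)) / mittagLeffler β (lam * z)) *
        fun z : ℂ => Complex.exp (y * Complex.log (1 + z)) := by
    ext z
    simp only [Pi.mul_apply, add_mul, Complex.exp_add]
    ring
  unfold genAppell
  rw [hsplit, iteratedDeriv_mul hf.contDiffAt (hlog y).contDiffAt]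
  simp only [iteratedDeriv_exp_mul_log_zero]
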